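/- Let G be a group and K ⊆ G finite. Then K ∈ 𝔚_{BT} (i.e., there exists n ∈ ℕ such that every finite nonempty F ⊆ G satisfies |F \ kF| ≥ |F|/n for some k ∈ K) if and only if the subgroup ⟨K⟩ generated by K is non-amenable. -/

import Mathlib

open Pointwise

/-- The Følner condition for a group `H`: for every finite `S ⊆ H` and every `n ≥ 1`
there is a finite nonempty `F ⊆ H` with `|sF \ F| ≤ |F|/n` for all `s ∈ S`. -/
def FolnerCond (H : Type*) [Group H] : Prop :=
  ∀ S : Set H, S.Finite → ∀ n : ℕ, 0 < n →
    ∃ F : Set H, F.Finite ∧ F.Nonempty ∧ ∀ s ∈ S, n * (s • F \ F).ncard ≤ F.ncard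

lemma aux_ncard_symm {G : Type*} [Group G] (g : G) (F : Set G) (hF : F.Finite) :
    (g • F \ F).ncard = (F \ g • F).ncard := by
  have hg : (g • F).Finite := hF.smul_set
  have h0 : (g • F).ncard = F.ncard := Set.ncard_smul_set g F
  have h1 := Set.ncard_inter_add_ncard_sdiff_eq_ncard (g • F) F hg
  have h2 := Set.ncard_inter_add_ncard_sdiff_eq_ncard F (g • F) hF
  rw [Set.inter_comm] at h2
  omega

lemma aux_word {G : Type*} [Group G] (K : Finset G) (g : G)
    (hg : g ∈ Subgroup.closure (K : Set G)) :
    ∃ c : ℕ, ∀ F : Set G, F.Finite → 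
      (g • F \ F).ncard ≤ c * ∑ k ∈ K, (k • F \ F).ncard := by
  induction hg using Subgroup.closure_induction with
  | mem x hx =>
    refine ⟨1, fun F hF => ?_⟩
    rw [one_mul]
    exact Finset.single_le_sum (f := fun k => (k • F \ F).ncard) (fun _ _ => Nat.zero_le _) hx
  | one => exact ⟨0, fun F hF => by simp⟩
  | mul x y _ _ hx hy =>
    obtain ⟨c, hc⟩ := hx
    obtain ⟨d, hd⟩ := hy
    refine ⟨d + c, fun F hF => ?_⟩
    have hsub : (x * y) • F \ F ⊆ x • (y • F \ F) ∪ (x • F \ F) := by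
      rw [mul_smul, Set.smul_set_sdiff]
      intro z hz
      by_cases h : z ∈ x • F
      · exact Or.inr ⟨h, hz.2⟩
      · exact Or.inl ⟨hz.1, h⟩
    have hfin : (x • (y • F \ F) ∪ (x • F \ F)).Finite :=
      ((hF.smul_set.sdiff).smul_set).union hF.smul_set.sdiff
    have h1 := Set.ncard_le_ncard hsub hfin
    have h2 := Set.ncard_union_le (x • (y • F \ F)) (x • F \ F)
    rw [Set.ncard_smul_set] at h2
    have := hc F hF
    have := hd F hF
    rw [add_mul]
    omega
  | inv x _ hx =>
    obtain ⟨c, hc⟩ := hx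
    refine ⟨c, fun F hF => ?_⟩
    have h : x⁻¹ • F \ F = x⁻¹ • (F \ x • F) := by
      rw [Set.smul_set_sdiff, inv_smul_smul]
    rw [h, Set.ncard_smul_set, ← aux_ncard_symm x F hF]
    exact hc F hF

lemma aux_lift {G : Type*} [Group G] (H : Subgroup G) (s : H) (F : Set H) :
    ((s : G) • (Subtype.val '' F : Set G) \ (Subtype.val '' F)).ncard = (s • F \ F).ncard := by
  have h : (s : G) • (Subtype.val '' F : Set G) = Subtype.val '' (s • F) := by
    ext z
    simp only [Set.mem_smul_set, Set.mem_image, smul_eq_mul]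
    constructor
    · rintro ⟨_, ⟨y, hy, rfl⟩, rfl⟩
      exact ⟨s * y, ⟨y, hy, rfl⟩, rfl⟩
    · rintro ⟨_, ⟨y, hy, rfl⟩, rfl⟩
      exact ⟨y, ⟨y, hy, rfl⟩, rfl⟩
  rw [h, ← Set.image_sdiff Subtype.val_injective, Set.ncard_image_of_injective _ Subtype.val_injective]

lemma aux_coset {G : Type*} [Group G] (H : Subgroup G) (S : Finset H) (N : ℕ) :
    ∀ m : ℕ, ∀ F : Set G, F.Finite → F.ncard = m →
      N * ∑ s ∈ S, ((s : G) • F \ F).ncard < F.ncard →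
      ∃ F' : Set H, F'.Finite ∧ N * ∑ s ∈ S, (s • F' \ F').ncard < F'.ncard := by
  intro m
  induction m using Nat.strong_induction_on with
  | _ m ih =>
  intro F hF hm hlt
  have hne : F.Nonempty := by
    rw [← Set.ncard_pos hF]; omega
  obtain ⟨f, hf⟩ := hne
  let C : Set G := {x | x * f⁻¹ ∈ H}
  have hC : ∀ (s : H) (x : G), (s : G)⁻¹ * x ∈ C ↔ x ∈ C := by
    intro s x
    change (s : G)⁻¹ * x * f⁻¹ ∈ H ↔ x * f⁻¹ ∈ H
    rw [mul_assoc]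
    exact H.mul_mem_cancel_left (H.inv_mem s.2)
  have hA : (F ∩ C).Finite := hF.inter_of_left C
  have hB : (F \ C).Finite := hF.sdiff
  have hcard := Set.ncard_inter_add_ncard_sdiff_eq_ncard F C hF
  have hs : ∀ s : H, ((s : G) • F \ F).ncard =
      ((s : G) • (F ∩ C) \ (F ∩ C)).ncard + ((s : G) • (F \ C) \ (F \ C)).ncard := by
    intro s
    rw [← Set.ncard_inter_add_ncard_sdiff_eq_ncard ((s : G) • F \ F) C hF.smul_set.sdiff]
    congr 2
    · ext x
      have := hC s x
      simp only [Set.mem_inter_iff, Set.mem_sdiff, Set.mem_smul_set_iff_inv_smul_mem, smul_eq_mul]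
      tauto
    · ext x
      have := hC s x
      simp only [Set.mem_inter_iff, Set.mem_sdiff, Set.mem_smul_set_iff_inv_smul_mem, smul_eq_mul]
      tauto
  simp only [hs, Finset.sum_add_distrib, mul_add] at hlt
  by_cases hb : N * ∑ s ∈ S, ((s : G) • (F \ C) \ (F \ C)).ncard < (F \ C).ncard
  · have hpos : 0 < (F ∩ C).ncard := by
      rw [Set.ncard_pos hA]
      exact ⟨f, hf, by change f * f⁻¹ ∈ H; simp⟩
    exact ih _ (by omega) (F \ C) hB rfl hb
  · have ha : N * ∑ s ∈ S, ((s : G) • (F ∩ C) \ (F ∩ C)).ncard < (F ∩ C).ncard := by omega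
    let φ : H → G := fun h => h * f
    have hφ : Function.Injective φ := fun a b h => Subtype.ext (mul_right_cancel h)
    have him : φ '' (φ ⁻¹' (F ∩ C)) = F ∩ C := by
      apply Set.image_preimage_eq_of_subset
      rintro x ⟨_, hx⟩
      exact ⟨⟨x * f⁻¹, hx⟩, by simp [φ]⟩
    have hsm : ∀ s : H, ((s : G) • (F ∩ C) \ (F ∩ C)).ncard =
        (s • (φ ⁻¹' (F ∩ C)) \ (φ ⁻¹' (F ∩ C))).ncard := by
      intro s
      have h1 : (s : G) • (F ∩ C) = φ '' (s • (φ ⁻¹' (F ∩ C))) := by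
        conv_lhs => rw [← him]
        ext z
        simp only [Set.mem_smul_set, Set.mem_image, smul_eq_mul]
        constructor
        · rintro ⟨_, ⟨y, hy, rfl⟩, rfl⟩
          exact ⟨s * y, ⟨y, hy, rfl⟩, by simp [φ, mul_assoc]⟩
        · rintro ⟨_, ⟨y, hy, rfl⟩, rfl⟩
          exact ⟨φ y, ⟨y, hy, rfl⟩, by simp [φ, mul_assoc]⟩
      rw [h1]
      conv_lhs => rw [← him]
      rw [Set.preimage_image_eq _ hφ, ← Set.image_sdiff hφ, Set.ncard_image_of_injective _ hφ]
    refine ⟨φ ⁻¹' (F ∩ C), hA.preimage hφ.injOn, ?_⟩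
    simp only [hsm] at ha
    rwa [← Set.ncard_image_of_injective _ hφ, him]

/-- A finite `K ⊆ G` belongs to `𝔚_{BT}` (there is `n` such that every finite nonempty
`F ⊆ G` satisfies `|F \ kF| ≥ |F|/n` for some `k ∈ K`) iff the subgroup `⟨K⟩` is
non-amenable. -/
theorem witness_iff_nonamenable {G : Type*} [Group G] (K : Finset G) :
    (∃ n : ℕ, 0 < n ∧ ∀ F : Set G, F.Finite → F.Nonempty →
        ∃ k ∈ K, F.ncard ≤ n * (F \ k • F).ncard) ↔
      ¬ FolnerCond (Subgroup.closure (K : Set G)) := by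
  constructor
  · rintro ⟨n, hn, h⟩ hfol
    obtain ⟨F, hF, hne, hS⟩ := hfol (Subtype.val ⁻¹' (K : Set G))
      (K.finite_toSet.preimage Subtype.val_injective.injOn) (n + 1) (Nat.succ_pos n)
    obtain ⟨k, hk, hle⟩ := h (Subtype.val '' F) (hF.image _) (hne.image _)
    have hk' : k ∈ Subgroup.closure (K : Set G) := Subgroup.subset_closure hk
    have h1 := hS ⟨k, hk'⟩ hk
    rw [← aux_ncard_symm k _ (hF.image _)] at hle
    have h2 := aux_lift (Subgroup.closure (K : Set G)) ⟨k, hk'⟩ F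
    simp only at h2
    rw [h2, Set.ncard_image_of_injective _ Subtype.val_injective] at hle
    have hpos : 0 < F.ncard := (Set.ncard_pos hF).2 hne
    have hd : ((⟨k, hk'⟩ : Subgroup.closure (K : Set G)) • F \ F).ncard = 0 := by
      rw [add_mul] at h1
      omega
    rw [hd] at hle
    omega
  · intro hnf
    by_contra hcon
    push Not at hcon
    apply hnf
    intro S hSfin n hn
    choose c hc using fun s : Subgroup.closure (K : Set G) => aux_word K s.1 s.2
    obtain ⟨S, rfl⟩ := hSfin.exists_finset_coe
    let M := n * (∑ s ∈ S, c s) * K.card + 1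
    obtain ⟨F, hF, hne, hK⟩ := hcon M (Nat.succ_pos _)
    have hpos : 0 < F.ncard := (Set.ncard_pos hF).2 hne
    have hsum : M * ∑ k ∈ K, (k • F \ F).ncard ≤ K.card * F.ncard := by
      rw [Finset.mul_sum, ← smul_eq_mul K.card]
      apply Finset.sum_le_card_nsmul
      intro k hk
      rw [aux_ncard_symm k F hF]
      exact (hK k hk).le
    have hS1 : ∑ s ∈ S, ((s : G) • F \ F).ncard ≤
        (∑ s ∈ S, c s) * ∑ k ∈ K, (k • F \ F).ncard := by
      rw [Finset.sum_mul]
      exact Finset.sum_le_sum fun s _ => hc s F hF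
    have key : n * ∑ s ∈ S, ((s : G) • F \ F).ncard < F.ncard := by
      have h3 := Nat.mul_le_mul_left n hS1
      rw [← mul_assoc] at h3
      refine lt_of_le_of_lt h3 ?_
      have h4 := Nat.mul_le_mul_left (n * ∑ s ∈ S, c s) hsum
      by_contra hcon2
      push Not at hcon2
      have h5 := Nat.mul_le_mul_left M hcon2
      have h6 : M * F.ncard = n * (∑ s ∈ S, c s) * (K.card * F.ncard) + F.ncard := by
        simp only [M]; ring
      have h7 : M * (n * (∑ s ∈ S, c s) * ∑ k ∈ K, (k • F \ F).ncard) =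
        n * (∑ s ∈ S, c s) * (M * ∑ k ∈ K, (k • F \ F).ncard) := by ring
      omega
    obtain ⟨F', hF', hlt⟩ := aux_coset _ S n _ F hF rfl key
    refine ⟨F', hF', (Set.ncard_pos hF').1 (by omega), fun s hs => ?_⟩
    refine le_trans (Nat.mul_le_mul_left n ?_) hlt.le
    exact Finset.single_le_sum (f := fun s => (s • F' \ F').ncard) (fun _ _ => Nat.zero_le _) hs
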